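/- Let Ω be a nonempty open subset of ℝ², ρ a C¹ moment weight function on Ω satisfying the Pearson equation div(ρΦ) = ρ(ψ₁,ψ₂) on Ω. Then the matrix-weighted Sobolev space W^{1,2}(Ω,ρ,ρΦ) is complete: if {u_n} is a sequence in L²(Ω,ρ) and {h_n} a sequence in L²(Ω,ρΦ) such that each h_n is a weak gradient of u_n, {u_n} is Cauchy in L²(Ω,ρ), and {h_n} is Cauchy in L²(Ω,ρΦ), then there exist u ∈ L²(Ω,ρ) and w ∈ L²(Ω,ρΦ) such that u_n → u in L²(Ω,ρ), h_n → w in L²(Ω,ρΦ), and w is a weak gradient of u. -/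

import Mathlib

open MeasureTheory Filter

noncomputable section

abbrev Poly2 := MvPolynomial (Fin 2) ℝ

/-- Evaluation of a two-variable real polynomial at a point of `ℝ × ℝ`. -/
def pev (p : Poly2) (x : ℝ × ℝ) : ℝ := MvPolynomial.eval ![x.1, x.2] p

/-- `uᵗ Φ v` where `Φ` is the matrix with polynomial entries `p11 p12 p21 p22`. -/
def bilPhi (p11 p12 p21 p22 : Poly2) (x u v : ℝ × ℝ) : ℝ :=
  u.1 * (pev p11 x * v.1 + pev p12 x * v.2) + u.2 * (pev p21 x * v.1 + pev p22 x * v.2)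

/-- The (classical) gradient of a two-variable polynomial. -/
def polyGrad (p : Poly2) (x : ℝ × ℝ) : ℝ × ℝ :=
  (pev (MvPolynomial.pderiv (0 : Fin 2) p) x, pev (MvPolynomial.pderiv (1 : Fin 2) p) x)

/-- `ρ` is a weight function on `Ω`. -/
def IsWeight (Ω : Set (ℝ × ℝ)) (ρ : ℝ × ℝ → ℝ) : Prop :=
  Measurable ρ ∧ (∀ᵐ x ∂(volume.restrict Ω), 0 < ρ x) ∧ IntegrableOn ρ Ω

/-- `ρ` is a moment weight function on `Ω`. -/
def IsMomentWeight (Ω : Set (ℝ × ℝ)) (ρ : ℝ × ℝ → ℝ) : Prop :=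
  Measurable ρ ∧ (∀ᵐ x ∂(volume.restrict Ω), 0 < ρ x) ∧
    ∀ m n : ℕ, IntegrableOn (fun x : ℝ × ℝ => |x.1| ^ m * |x.2| ^ n * ρ x) Ω

/-- `Φ` is symmetric and positive definite at every point of `Ω`. -/
def SymPosDef (Ω : Set (ℝ × ℝ)) (p11 p12 p21 p22 : Poly2) : Prop :=
  p12 = p21 ∧ ∀ x ∈ Ω, ∀ ζ : ℝ × ℝ, ζ ≠ 0 → 0 < bilPhi p11 p12 p21 p22 x ζ ζ

/-- `Φ` is symmetric, has entries of degree at most 2, and is positive definite on `Ω`. -/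
def GoodPhi (Ω : Set (ℝ × ℝ)) (p11 p12 p21 p22 : Poly2) : Prop :=
  SymPosDef Ω p11 p12 p21 p22 ∧ p11.totalDegree ≤ 2 ∧ p12.totalDegree ≤ 2 ∧
    p21.totalDegree ≤ 2 ∧ p22.totalDegree ≤ 2

/-- The Pearson equation `div(ρΦ) = ρ(ψ₁,ψ₂)` with explicit degree-one polynomials
`ψⱼ(x) = d_{j1} x₁ + d_{j2} x₂ + e_j` having linearly independent linear parts. -/
def PearsonWith (Ω : Set (ℝ × ℝ)) (ρ : ℝ × ℝ → ℝ) (p11 p12 p21 p22 : Poly2)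
    (d11 d12 d21 d22 e1 e2 : ℝ) : Prop :=
  ContDiffOn ℝ 1 ρ Ω ∧ d11 * d22 - d12 * d21 ≠ 0 ∧
    (∀ x ∈ Ω,
      fderiv ℝ (fun y => ρ y * pev p11 y) x (1, 0) +
        fderiv ℝ (fun y => ρ y * pev p21 y) x (0, 1) = ρ x * (d11 * x.1 + d12 * x.2 + e1)) ∧
    (∀ x ∈ Ω,
      fderiv ℝ (fun y => ρ y * pev p12 y) x (1, 0) +
        fderiv ℝ (fun y => ρ y * pev p22 y) x (0, 1) = ρ x * (d21 * x.1 + d22 * x.2 + e2))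

/-- The Pearson equation `div(ρΦ) = ρ(ψ₁,ψ₂)` for some admissible `ψ₁, ψ₂`. -/
def Pearson (Ω : Set (ℝ × ℝ)) (ρ : ℝ × ℝ → ℝ) (p11 p12 p21 p22 : Poly2) : Prop :=
  ∃ d11 d12 d21 d22 e1 e2 : ℝ, PearsonWith Ω ρ p11 p12 p21 p22 d11 d12 d21 d22 e1 e2

/-- `div(ρΦv)` for a pair of polynomials `v = (v1, v2)`. -/
def divRhoPhi (ρ : ℝ × ℝ → ℝ) (p11 p12 p21 p22 v1 v2 : Poly2) (x : ℝ × ℝ) : ℝ :=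
  fderiv ℝ (fun y => ρ y * (pev p11 y * pev v1 y + pev p12 y * pev v2 y)) x (1, 0) +
    fderiv ℝ (fun y => ρ y * (pev p21 y * pev v1 y + pev p22 y * pev v2 y)) x (0, 1)

/-- Membership in `L²(Ω, ρ)`. -/
def MemL2 (Ω : Set (ℝ × ℝ)) (ρ : ℝ × ℝ → ℝ) (u : ℝ × ℝ → ℝ) : Prop :=
  Measurable u ∧ IntegrableOn (fun x => u x ^ 2 * ρ x) Ω

/-- Membership in the matrix-weighted Lebesgue space `L²(Ω, ρΦ)`. -/
def MemL2M (Ω : Set (ℝ × ℝ)) (ρ : ℝ × ℝ → ℝ) (p11 p12 p21 p22 : Poly2)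
    (w : ℝ × ℝ → ℝ × ℝ) : Prop :=
  Measurable w ∧ IntegrableOn (fun x => ρ x * bilPhi p11 p12 p21 p22 x (w x) (w x)) Ω

/-- `h` is a weak gradient of `u`. -/
def IsWeakGrad (Ω : Set (ℝ × ℝ)) (ρ : ℝ × ℝ → ℝ) (p11 p12 p21 p22 : Poly2)
    (u : ℝ × ℝ → ℝ) (h : ℝ × ℝ → ℝ × ℝ) : Prop :=
  MemL2M Ω ρ p11 p12 p21 p22 h ∧
    ∀ v1 v2 : Poly2,
      ∫ x in Ω, u x * divRhoPhi ρ p11 p12 p21 p22 v1 v2 x =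
        - ∫ x in Ω, ρ x * bilPhi p11 p12 p21 p22 x (h x) (pev v1 x, pev v2 x)

/-- Membership in `W(Ω, ρ, ρΦ)`, the closure of the polynomials in `W^{1,2}(Ω, ρ, ρΦ)`,
for a function `u` with weak gradient `g`. -/
def MemW (Ω : Set (ℝ × ℝ)) (ρ : ℝ × ℝ → ℝ) (p11 p12 p21 p22 : Poly2)
    (u : ℝ × ℝ → ℝ) (g : ℝ × ℝ → ℝ × ℝ) : Prop :=
  MemL2 Ω ρ u ∧ IsWeakGrad Ω ρ p11 p12 p21 p22 u g ∧
    ∀ ε : ℝ, 0 < ε → ∃ q : Poly2,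
      (∫ x in Ω, (u x - pev q x) ^ 2 * ρ x) +
        (∫ x in Ω, ρ x * bilPhi p11 p12 p21 p22 x (g x - polyGrad q x) (g x - polyGrad q x))
          < ε ^ 2

lemma aux_norm_sq {μ : Measure (ℝ × ℝ)} {f : ℝ × ℝ → ℝ} (hf : MemLp f 2 μ) :
    ‖hf.toLp f‖ ^ 2 = ∫ x, (f x) ^ 2 ∂μ := by
  rw [← real_inner_self_eq_norm_sq, L2.inner_def]
  apply integral_congr_ae
  filter_upwards [hf.coeFn_toLp] with x hx
  rw [hx]; simp [sq]

lemma aux_inner {μ : Measure (ℝ × ℝ)} {f g : ℝ × ℝ → ℝ} (hf : MemLp f 2 μ) (hg : MemLp g 2 μ) :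
    inner ℝ (hf.toLp f) (hg.toLp g) = ∫ x, f x * g x ∂μ := by
  rw [L2.inner_def]
  apply integral_congr_ae
  filter_upwards [hf.coeFn_toLp, hg.coeFn_toLp] with x hx hy
  rw [hx, hy]; simp [mul_comm]

lemma aux_complete {μ : Measure (ℝ × ℝ)} (f : ℕ → ℝ × ℝ → ℝ) (hf : ∀ n, MemLp (f n) 2 μ)
    (hc : ∀ ε : ℝ, 0 < ε → ∃ N : ℕ, ∀ m ≥ N, ∀ n ≥ N, ∫ x, (f m x - f n x) ^ 2 ∂μ < ε ^ 2) :
    ∃ F : ℝ × ℝ → ℝ, Measurable F ∧ MemLp F 2 μ ∧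
      Tendsto (fun n => ∫ x, (f n x - F x) ^ 2 ∂μ) atTop (nhds 0) ∧
      ∀ G : ℝ × ℝ → ℝ, MemLp G 2 μ →
        Tendsto (fun n => ∫ x, f n x * G x ∂μ) atTop (nhds (∫ x, F x * G x ∂μ)) := by
  have hcs : CauchySeq (fun n => (hf n).toLp (f n)) := by
    rw [Metric.cauchySeq_iff]
    intro ε hε
    obtain ⟨N, hN⟩ := hc ε hε
    refine ⟨N, fun m hm n hn => ?_⟩
    rw [dist_eq_norm, ← MemLp.toLp_sub]
    refine lt_of_pow_lt_pow_left₀ 2 hε.le ?_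
    rw [aux_norm_sq]
    exact hN m hm n hn
  obtain ⟨F, hF⟩ := cauchySeq_tendsto_of_complete hcs
  have hFm : MemLp (F : ℝ × ℝ → ℝ) 2 μ := Lp.memLp F
  have hFe : hFm.toLp (F : ℝ × ℝ → ℝ) = F := Lp.toLp_coeFn F hFm
  refine ⟨F, (Lp.stronglyMeasurable F).measurable, hFm, ?_, ?_⟩
  · have h1 := (tendsto_iff_norm_sub_tendsto_zero.1 hF).pow 2
    have h2 : (fun n => ∫ x, (f n x - F x) ^ 2 ∂μ) = fun n => ‖(hf n).toLp (f n) - F‖ ^ 2 := by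
      funext n
      conv_rhs => rw [← hFe]
      rw [← MemLp.toLp_sub, aux_norm_sq]
      rfl
    rw [h2]
    simpa using h1
  · intro G hG
    have h1 : Tendsto (fun n => inner ℝ ((hf n).toLp (f n)) (hG.toLp G)) atTop
        (nhds (inner ℝ F (hG.toLp G))) := hF.inner tendsto_const_nhds
    rw [← hFe, aux_inner] at h1
    simpa only [aux_inner] using h1

lemma aux_pev_hasFDerivAt (p : Poly2) (x : ℝ × ℝ) :
    HasFDerivAt (pev p) (pev (MvPolynomial.pderiv (0 : Fin 2) p) x • ContinuousLinearMap.fst ℝ ℝ ℝ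
      + pev (MvPolynomial.pderiv (1 : Fin 2) p) x • ContinuousLinearMap.snd ℝ ℝ ℝ) x := by
  induction p using MvPolynomial.induction_on with
  | C a =>
    have : pev (MvPolynomial.C a) = fun _ => a := by funext y; simp [pev]
    rw [this]
    simpa [pev] using hasFDerivAt_const a x
  | add p q hp hq =>
    have : pev (p + q) = fun y => pev p y + pev q y := by funext y; simp [pev]
    rw [this]
    refine (hp.add hq).congr_fderiv ?_
    ext <;> simp [pev]
  | mul_X p i hp =>
    fin_cases i
    · have : pev (p * MvPolynomial.X 0) = fun y => pev p y * y.1 := by funext y; simp [pev]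
      simp only [Fin.zero_eta]
      rw [this]
      refine (hp.mul hasFDerivAt_fst).congr_fderiv ?_
      ext <;> simp [pev, MvPolynomial.pderiv_X, Pi.single_apply] <;> ring
    · have : pev (p * MvPolynomial.X 1) = fun y => pev p y * y.2 := by funext y; simp [pev]
      simp only [Fin.mk_one]
      rw [this]
      refine (hp.mul hasFDerivAt_snd).congr_fderiv ?_
      ext <;> simp [pev, MvPolynomial.pderiv_X, Pi.single_apply] <;> ring

lemma aux_pev_measurable (p : Poly2) : Measurable (pev p) :=
  (continuous_iff_continuousAt.2 fun x => (aux_pev_hasFDerivAt p x).continuousAt).measurable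

lemma aux_pev_integrable {Ω : Set (ℝ × ℝ)} {ρ : ℝ × ℝ → ℝ} (hρ : IsMomentWeight Ω ρ) (p : Poly2) :
    IntegrableOn (fun x => ρ x * pev p x) Ω := by
  induction p using MvPolynomial.induction_on' with
  | monomial s a =>
    have h1 := ((hρ.2.2 (s 0) (s 1)).const_mul |a|)
    refine Integrable.mono h1 ((hρ.1.mul (aux_pev_measurable _)).aestronglyMeasurable) ?_
    refine Eventually.of_forall fun x => le_of_eq ?_
    simp [pev, MvPolynomial.eval_monomial, Finsupp.prod_fintype, Fin.prod_univ_two]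
    ring
  | add p q hp hq =>
    have := Integrable.add hp hq
    refine this.congr (Eventually.of_forall fun x => ?_)
    simp [pev, mul_add]

lemma aux_div {Ω : Set (ℝ × ℝ)} (hΩ : IsOpen Ω) {ρ : ℝ × ℝ → ℝ} {p11 p12 p21 p22 : Poly2}
    (hP : Pearson Ω ρ p11 p12 p21 p22) (v1 v2 : Poly2) :
    ∃ q : Poly2, ∀ x ∈ Ω, divRhoPhi ρ p11 p12 p21 p22 v1 v2 x = ρ x * pev q x := by
  obtain ⟨d11, d12, d21, d22, e1, e2, hC, -, h1, h2⟩ := hP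
  refine ⟨v1 * (MvPolynomial.C d11 * MvPolynomial.X 0 + MvPolynomial.C d12 * MvPolynomial.X 1
      + MvPolynomial.C e1) + v2 * (MvPolynomial.C d21 * MvPolynomial.X 0
      + MvPolynomial.C d22 * MvPolynomial.X 1 + MvPolynomial.C e2)
      + (p11 * MvPolynomial.pderiv 0 v1 + p12 * MvPolynomial.pderiv 0 v2
      + p21 * MvPolynomial.pderiv 1 v1 + p22 * MvPolynomial.pderiv 1 v2), fun x hx => ?_⟩
  have hr : DifferentiableAt ℝ ρ x :=
    (hC.differentiableOn (by norm_num)).differentiableAt (hΩ.mem_nhds hx)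
  have hd : ∀ p : Poly2, HasFDerivAt (fun y => ρ y * pev p y)
      (fderiv ℝ (fun y => ρ y * pev p y) x) x := fun p =>
    (hr.mul (aux_pev_hasFDerivAt p x).differentiableAt).hasFDerivAt
  have key : ∀ (p q : Poly2) (e : ℝ × ℝ),
      fderiv ℝ (fun y => ρ y * (pev p y * pev v1 y + pev q y * pev v2 y)) x e
      = fderiv ℝ (fun y => ρ y * pev p y) x e * pev v1 x
        + fderiv ℝ (fun y => ρ y * pev q y) x e * pev v2 x
        + ρ x * pev p x * (pev (MvPolynomial.pderiv 0 v1) x * e.1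
          + pev (MvPolynomial.pderiv 1 v1) x * e.2)
        + ρ x * pev q x * (pev (MvPolynomial.pderiv 0 v2) x * e.1
          + pev (MvPolynomial.pderiv 1 v2) x * e.2) := fun p q e => by
    have h3 := ((hd p).mul (aux_pev_hasFDerivAt v1 x)).add ((hd q).mul (aux_pev_hasFDerivAt v2 x))
    have h4 : (fun y => ρ y * (pev p y * pev v1 y + pev q y * pev v2 y)) =
      ((fun y => ρ y * pev p y) * pev v1 + (fun y => ρ y * pev q y) * pev v2) := by
      funext y; simp; ring
    rw [h4, h3.fderiv]
    simp
    ring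
  have e1' := h1 x hx
  have e2' := h2 x hx
  rw [divRhoPhi, key, key]
  simp [pev] at e1' e2' ⊢
  linear_combination (MvPolynomial.eval ![x.1, x.2] v1) * e1' + (MvPolynomial.eval ![x.1, x.2] v2) * e2'

lemma aux_chol {a b c : ℝ} (h : ∀ z : ℝ × ℝ, z ≠ 0 →
    0 < z.1 * (a * z.1 + b * z.2) + z.2 * (b * z.1 + c * z.2)) :
    0 < Real.sqrt a ∧ 0 < Real.sqrt (c - (b / Real.sqrt a) ^ 2) ∧
    ∀ z y : ℝ × ℝ, z.1 * (a * y.1 + b * y.2) + z.2 * (b * y.1 + c * y.2) =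
      (Real.sqrt a * z.1 + b / Real.sqrt a * z.2) * (Real.sqrt a * y.1 + b / Real.sqrt a * y.2) +
      (Real.sqrt (c - (b / Real.sqrt a) ^ 2) * z.2) *
        (Real.sqrt (c - (b / Real.sqrt a) ^ 2) * y.2) := by
  have ha : 0 < a := by simpa using h (1, 0) (by simp)
  have hs : 0 < Real.sqrt a := Real.sqrt_pos.2 ha
  have hss : Real.sqrt a * Real.sqrt a = a := Real.mul_self_sqrt ha.le
  have hst : Real.sqrt a * (b / Real.sqrt a) = b := by field_simp
  generalize Real.sqrt a = s at *
  generalize b / s = t at *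
  have hc : 0 < c - t ^ 2 := by
    have := h (-t, s) (by simp [hs.ne'])
    simp only at this
    have h2 : 0 < s ^ 2 * (c - t ^ 2) := by
      rw [← hss, ← hst] at this
      nlinarith
    exact pos_of_mul_pos_right h2 (by positivity)
  have hr := Real.mul_self_sqrt hc.le
  refine ⟨hs, Real.sqrt_pos.2 hc, fun z y => ?_⟩
  linear_combination (-z.1 * y.1) * hss - (z.1 * y.2 + z.2 * y.1) * hst - z.2 * y.2 * hr

lemma aux_eps {a : ℕ → ℝ} (ha : Tendsto a atTop (nhds 0)) (ε : ℝ) (hε : 0 < ε) :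
    ∃ N : ℕ, ∀ n ≥ N, a n < ε ^ 2 :=
  eventually_atTop.1 (ha.eventually_lt_const (by positivity))

/-- Completeness of the matrix-weighted Sobolev space
`W^{1,2}(Ω, ρ, ρΦ)`. -/
theorem W12_complete (Ω : Set (ℝ × ℝ)) (hΩopen : IsOpen Ω) (hΩne : Ω.Nonempty)
    (ρ : ℝ × ℝ → ℝ) (hρ : IsMomentWeight Ω ρ)
    (p11 p12 p21 p22 : Poly2) (hΦ : GoodPhi Ω p11 p12 p21 p22)
    (hP : Pearson Ω ρ p11 p12 p21 p22)
    (u : ℕ → ℝ × ℝ → ℝ) (h : ℕ → ℝ × ℝ → ℝ × ℝ)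
    (huL2 : ∀ n, MemL2 Ω ρ (u n))
    (hwg : ∀ n, IsWeakGrad Ω ρ p11 p12 p21 p22 (u n) (h n))
    (hcauchyu : ∀ ε : ℝ, 0 < ε → ∃ N : ℕ, ∀ m ≥ N, ∀ n ≥ N,
      (∫ x in Ω, (u m x - u n x) ^ 2 * ρ x) < ε ^ 2)
    (hcauchyh : ∀ ε : ℝ, 0 < ε → ∃ N : ℕ, ∀ m ≥ N, ∀ n ≥ N,
      (∫ x in Ω, ρ x * bilPhi p11 p12 p21 p22 x (h m x - h n x) (h m x - h n x)) < ε ^ 2) :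
    ∃ (uu : ℝ × ℝ → ℝ) (w : ℝ × ℝ → ℝ × ℝ), MemL2 Ω ρ uu ∧
      MemL2M Ω ρ p11 p12 p21 p22 w ∧
      (∀ ε : ℝ, 0 < ε → ∃ N : ℕ, ∀ n ≥ N,
        (∫ x in Ω, (u n x - uu x) ^ 2 * ρ x) < ε ^ 2) ∧
      (∀ ε : ℝ, 0 < ε → ∃ N : ℕ, ∀ n ≥ N,
        (∫ x in Ω, ρ x * bilPhi p11 p12 p21 p22 x (h n x - w x) (h n x - w x)) < ε ^ 2) ∧
      IsWeakGrad Ω ρ p11 p12 p21 p22 uu w := by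
  obtain ⟨⟨rfl, hpos⟩, -⟩ := hΦ
  have hΩm := hΩopen.measurableSet
  obtain ⟨hρm, hρpos, -⟩ := id hρ
  set μ := (volume : Measure (ℝ × ℝ)).restrict Ω with hμ
  have hmem : ∀ᵐ x ∂μ, x ∈ Ω := ae_restrict_mem hΩm
  -- coefficient functions
  obtain ⟨k, hk⟩ : ∃ k : ℝ × ℝ → ℝ, k = fun x => Real.sqrt (ρ x) := ⟨_, rfl⟩
  obtain ⟨s, hs⟩ : ∃ s : ℝ × ℝ → ℝ, s = fun x => Real.sqrt (pev p11 x) := ⟨_, rfl⟩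
  obtain ⟨t, ht⟩ : ∃ t : ℝ × ℝ → ℝ, t = fun x => pev p12 x / s x := ⟨_, rfl⟩
  obtain ⟨r, hr⟩ : ∃ r : ℝ × ℝ → ℝ, r = fun x => Real.sqrt (pev p22 x - (t x) ^ 2) := ⟨_, rfl⟩
  have hkm : Measurable k := hk ▸ hρm.sqrt
  have hsm : Measurable s := hs ▸ (aux_pev_measurable p11).sqrt
  have htm : Measurable t := ht ▸ (aux_pev_measurable p12).div hsm
  have hrm : Measurable r := hr ▸ ((aux_pev_measurable p22).sub (htm.pow_const 2)).sqrt
  have hkρ : ∀ᵐ x ∂μ, 0 < k x ∧ ρ x = k x * k x := by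
    filter_upwards [hρpos] with x hx
    rw [hk]
    exact ⟨Real.sqrt_pos.2 hx, (Real.mul_self_sqrt hx.le).symm⟩
  have hfac : ∀ᵐ x ∂μ, 0 < s x ∧ 0 < r x ∧ ∀ z y : ℝ × ℝ, bilPhi p11 p12 p12 p22 x z y =
      (s x * z.1 + t x * z.2) * (s x * y.1 + t x * y.2) + (r x * z.2) * (r x * y.2) := by
    filter_upwards [hmem] with x hx
    have := aux_chol (a := pev p11 x) (b := pev p12 x) (c := pev p22 x) (hpos x hx)
    rw [hr, ht, hs]
    exact this
  -- the transforms
  let A : (ℝ × ℝ → ℝ × ℝ) → ℝ × ℝ → ℝ := fun z x => k x * (s x * (z x).1 + t x * (z x).2)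
  let B : (ℝ × ℝ → ℝ × ℝ) → ℝ × ℝ → ℝ := fun z x => k x * (r x * (z x).2)
  have hbil : ∀ z y : ℝ × ℝ → ℝ × ℝ, (fun x => ρ x * bilPhi p11 p12 p12 p22 x (z x) (y x)) =ᵐ[μ]
      fun x => A z x * A y x + B z x * B y x := by
    intro z y
    filter_upwards [hkρ, hfac] with x hx hf
    simp only [A, B]
    rw [hf.2.2, hx.2]; ring
  have hAm : ∀ z : ℝ × ℝ → ℝ × ℝ, Measurable z → Measurable (A z) := fun z hz =>
    hkm.mul ((hsm.mul hz.fst).add (htm.mul hz.snd))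
  have hBm : ∀ z : ℝ × ℝ → ℝ × ℝ, Measurable z → Measurable (B z) := fun z hz =>
    hkm.mul (hrm.mul hz.snd)
  have hAB : ∀ z : ℝ × ℝ → ℝ × ℝ, Measurable z →
      Integrable (fun x => ρ x * bilPhi p11 p12 p12 p22 x (z x) (z x)) μ →
      MemLp (A z) 2 μ ∧ MemLp (B z) 2 μ := by
    intro z hz hi
    have hi' := hi.congr (hbil z z)
    rw [memLp_two_iff_integrable_sq (hAm z hz).aestronglyMeasurable,
      memLp_two_iff_integrable_sq (hBm z hz).aestronglyMeasurable]
    constructor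
    · refine hi'.mono ((hAm z hz).pow_const 2).aestronglyMeasurable (Eventually.of_forall fun x => ?_)
      rw [Real.norm_eq_abs, Real.norm_eq_abs, abs_of_nonneg (by positivity), abs_of_nonneg (by nlinarith [sq_nonneg (A z x), sq_nonneg (B z x)])]
      nlinarith [sq_nonneg (B z x)]
    · refine hi'.mono ((hBm z hz).pow_const 2).aestronglyMeasurable (Eventually.of_forall fun x => ?_)
      rw [Real.norm_eq_abs, Real.norm_eq_abs, abs_of_nonneg (by positivity), abs_of_nonneg (by nlinarith [sq_nonneg (A z x), sq_nonneg (B z x)])]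
      nlinarith [sq_nonneg (A z x)]
  -- the limit of u
  have hsq : ∀ f : ℝ × ℝ → ℝ, (fun x => f x ^ 2 * ρ x) =ᵐ[μ] fun x => (k x * f x) ^ 2 := by
    intro f
    filter_upwards [hkρ] with x hx
    rw [hx.2]; ring
  have hkmem : ∀ f : ℝ × ℝ → ℝ, Measurable f → Integrable (fun x => f x ^ 2 * ρ x) μ →
      MemLp (fun x => k x * f x) 2 μ := by
    intro f hf hi
    refine (memLp_two_iff_integrable_sq (hkm.mul hf).aestronglyMeasurable).2 ?_
    exact hi.congr (hsq f)
  obtain ⟨U, hUm, hU2, hUt, hUi⟩ := aux_complete (fun n x => k x * u n x)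
    (fun n => hkmem _ (huL2 n).1 (huL2 n).2) (by
      intro ε hε
      obtain ⟨N, hN⟩ := hcauchyu ε hε
      refine ⟨N, fun m hm n hn => ?_⟩
      have h1 := hN m hm n hn
      rw [integral_congr_ae (hsq fun x => u m x - u n x)] at h1
      simpa only [mul_sub] using h1)
  have hhAB := fun n => hAB (h n) (hwg n).1.1 (hwg n).1.2
  have hAsub : ∀ y z : ℝ × ℝ → ℝ × ℝ, A (fun x => y x - z x) = fun x => A y x - A z x := by
    intro y z; funext x; simp [A]; ring
  have hBsub : ∀ y z : ℝ × ℝ → ℝ × ℝ, B (fun x => y x - z x) = fun x => B y x - B z x := by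
    intro y z; funext x; simp [B]; ring
  have hsplit : ∀ y z : ℝ × ℝ → ℝ × ℝ, MemLp (A y) 2 μ → MemLp (B y) 2 μ → MemLp (A z) 2 μ →
      MemLp (B z) 2 μ → 
      ∫ x, ρ x * bilPhi p11 p12 p12 p22 x (y x - z x) (y x - z x) ∂μ =
      (∫ x, (A y x - A z x) ^ 2 ∂μ) + ∫ x, (B y x - B z x) ^ 2 ∂μ := by
    intro y z h1 h2 h3 h4
    rw [integral_congr_ae (hbil (fun x => y x - z x) (fun x => y x - z x)), hAsub, hBsub]
    simp only [sq]
    exact integral_add ((h1.sub h3).integrable_mul (h1.sub h3))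
      ((h2.sub h4).integrable_mul (h2.sub h4))
  have hsplit' := fun m n => hsplit (h m) (h n) (hhAB m).1 (hhAB m).2 (hhAB n).1 (hhAB n).2
  have hnn : ∀ f : ℝ × ℝ → ℝ, 0 ≤ ∫ x, f x ^ 2 ∂μ := fun f => integral_nonneg fun x => sq_nonneg _
  obtain ⟨F, hFm, hF2, hFt, hFi⟩ := aux_complete (fun n => A (h n)) (fun n => (hhAB n).1) (by
      intro ε hε
      obtain ⟨N, hN⟩ := hcauchyh ε hε
      refine ⟨N, fun m hm n hn => ?_⟩
      have h1 := hN m hm n hn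
      rw [hsplit'] at h1
      linarith [hnn fun x => B (h m) x - B (h n) x])
  obtain ⟨G, hGm, hG2, hGt, hGi⟩ := aux_complete (fun n => B (h n)) (fun n => (hhAB n).2) (by
      intro ε hε
      obtain ⟨N, hN⟩ := hcauchyh ε hε
      refine ⟨N, fun m hm n hn => ?_⟩
      have h1 := hN m hm n hn
      rw [hsplit'] at h1
      linarith [hnn fun x => A (h m) x - A (h n) x])
  obtain ⟨uu, huu⟩ : ∃ uu : ℝ × ℝ → ℝ, uu = fun x => U x / k x := ⟨_, rfl⟩
  obtain ⟨w2, hw2⟩ : ∃ w2 : ℝ × ℝ → ℝ, w2 = fun x => G x / k x / r x := ⟨_, rfl⟩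
  obtain ⟨w, hw⟩ : ∃ w : ℝ × ℝ → ℝ × ℝ, w = fun x => ((F x / k x - t x * w2 x) / s x, w2 x) :=
    ⟨_, rfl⟩
  have huum : Measurable uu := huu ▸ hUm.div hkm
  have hw2m : Measurable w2 := hw2 ▸ (hGm.div hkm).div hrm
  have hwm : Measurable w := hw ▸ (((hFm.div hkm).sub (htm.mul hw2m)).div hsm).prodMk hw2m
  have huuU : (fun x => k x * uu x) =ᵐ[μ] U := by
    filter_upwards [hkρ] with x hx
    have := hx.1.ne'
    rw [huu]; field_simp
  have hAw : A w =ᵐ[μ] F := by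
    filter_upwards [hkρ, hfac] with x hx hf
    have h1 := hx.1.ne'
    have h2 := hf.1.ne'
    simp only [A, hw]
    field_simp
    ring
  have hBw : B w =ᵐ[μ] G := by
    filter_upwards [hkρ, hfac] with x hx hf
    have h1 := hx.1.ne'
    have h2 := hf.2.1.ne'
    simp only [B, hw, hw2]
    field_simp
  have hAw2 : MemLp (A w) 2 μ := (memLp_congr_ae hAw).2 hF2
  have hBw2 : MemLp (B w) 2 μ := (memLp_congr_ae hBw).2 hG2
  have huu2 : MemLp (fun x => k x * uu x) 2 μ := (memLp_congr_ae huuU).2 hU2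
  have hwM : MemL2M Ω ρ p11 p12 p12 p22 w := by
    refine ⟨hwm, Integrable.congr ?_ (hbil w w).symm⟩
    exact (hAw2.integrable_mul hAw2).add (hBw2.integrable_mul hBw2)
  refine ⟨uu, w, ⟨huum, huu2.integrable_sq.congr (hsq uu).symm⟩, hwM, ?_, ?_, hwM, ?_⟩
  · refine aux_eps (hUt.congr fun n => ?_)
    refine integral_congr_ae ?_
    filter_upwards [huuU, hsq (fun x => u n x - uu x)] with x hx hy
    rw [hy, ← hx]; ring
  · refine aux_eps (Tendsto.congr (fun n => ?_) (by simpa using hFt.add hGt))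
    rw [hsplit (h n) w (hhAB n).1 (hhAB n).2 hAw2 hBw2]
    congr 1
    · refine integral_congr_ae ?_
      filter_upwards [hAw] with x hx
      rw [hx]
    · refine integral_congr_ae ?_
      filter_upwards [hBw] with x hx
      rw [hx]
  · intro v1 v2
    obtain ⟨q, hq⟩ := aux_div hΩopen hP v1 v2
    have hpp := fun p => aux_pev_integrable hρ p
    have hq2 : MemLp (fun x => k x * pev q x) 2 μ := by
      refine hkmem _ (aux_pev_measurable q) ((hpp (q ^ 2)).congr (Eventually.of_forall fun x => ?_))
      simp [pev]; ring
    have hvm : Measurable (fun x => (pev v1 x, pev v2 x)) :=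
      (aux_pev_measurable v1).prodMk (aux_pev_measurable v2)
    obtain ⟨hV1, hV2⟩ := hAB (fun x => (pev v1 x, pev v2 x)) hvm (by
      refine (hpp (v1 * (p11 * v1 + p12 * v2) + v2 * (p12 * v1 + p22 * v2))).congr
        (Eventually.of_forall fun x => ?_)
      simp [pev, bilPhi])
    have hL : ∀ f : ℝ × ℝ → ℝ, (fun x => f x * divRhoPhi ρ p11 p12 p12 p22 v1 v2 x) =ᵐ[μ]
        fun x => (k x * f x) * (k x * pev q x) := by
      intro f
      filter_upwards [hmem, hkρ] with x hx hy
      rw [hq x hx, hy.2]; ring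
    have hR : ∀ z : ℝ × ℝ → ℝ × ℝ, MemLp (A z) 2 μ → MemLp (B z) 2 μ →
        ∫ x, ρ x * bilPhi p11 p12 p12 p22 x (z x) (pev v1 x, pev v2 x) ∂μ =
        (∫ x, A z x * A (fun x => (pev v1 x, pev v2 x)) x ∂μ) +
          ∫ x, B z x * B (fun x => (pev v1 x, pev v2 x)) x ∂μ := by
      intro z h1 h2
      rw [integral_congr_ae (hbil z (fun x => (pev v1 x, pev v2 x)))]
      exact integral_add (h1.integrable_mul hV1) (h2.integrable_mul hV2)
    have T1 := hUi _ hq2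
    have T2 := ((hFi _ hV1).add (hGi _ hV2)).neg
    have hT := tendsto_nhds_unique T1 (T2.congr fun n => ?_)
    · rw [integral_congr_ae (hL uu), hR w hAw2 hBw2]
      have hmul : ∀ {a b : ℝ × ℝ → ℝ} (c : ℝ × ℝ → ℝ), a =ᵐ[μ] b →
          ∫ x, a x * c x ∂μ = ∫ x, b x * c x ∂μ := fun c hab =>
        integral_congr_ae (hab.mul (ae_eq_refl c))
      have e1 := hmul (fun x => k x * pev q x) huuU
      have e2 := hmul (A (fun x => (pev v1 x, pev v2 x))) hAw
      have e3 := hmul (B (fun x => (pev v1 x, pev v2 x))) hBw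
      rw [e2, e3]
      exact e1.trans hT
    · rw [← hR (h n) (hhAB n).1 (hhAB n).2, ← integral_congr_ae (hL (u n))]
      exact ((hwg n).2 v1 v2).symm
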